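/- Let F be a reduced convex foliation of degree d ≥ 1 on ℙ²(ℂ) defined by ω = a dx + b dy + c dz (so F admits 3d pairwise non-proportional invariant lines), and suppose the line z = 0 is invariant, i.e. z divides both a and b. Define A_d(x,y) = (∂a/∂z)(x,y,0) and B_d(x,y) = (∂b/∂z)(x,y,0), which are homogeneous of degree d and satisfy x·A_d + y·B_d = −c(x,y,0). Then: (i) A_d and B_d have no common factor; (ii) every linear factor of D = (∂A_d/∂x)(∂B_d/∂y) − (∂A_d/∂y)(∂B_d/∂x) divides x·A_d + y·B_d (i.e. the homogeneous foliation defined by A_d dx + B_d dy is convex); and (iii) x·A_d + y·B_d is squarefree, i.e. it is a product of d+1 pairwise non-proportional linear forms. -/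

import Mathlib

open MvPolynomial

noncomputable section

/-- Polynomials in three variables `x = X 0`, `y = X 1`, `z = X 2` over `ℂ`. -/
abbrev P3 : Type := MvPolynomial (Fin 3) ℂ

/-- The linear form `αx + βy + γz` with coefficient vector `l = (α, β, γ)`. -/
def lin (l : Fin 3 → ℂ) : P3 := C (l 0) * X 0 + C (l 1) * X 1 + C (l 2) * X 2

/-- The line `{αx + βy + γz = 0}` is invariant by the foliation defined by
`ω = a dx + b dy + c dz`: the linear form divides the coefficients of `ω ∧ dℓ`. -/
def InvLine (a b c : P3) (l : Fin 3 → ℂ) : Prop :=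
  l ≠ 0 ∧
  lin l ∣ (C (l 1) * a - C (l 0) * b) ∧
  lin l ∣ (C (l 2) * a - C (l 0) * c) ∧
  lin l ∣ (C (l 2) * b - C (l 1) * c)

/-- `(a, b, c)` defines a foliation of degree `d` on `ℙ²(ℂ)`: homogeneous of degree
`d+1`, without common factor, satisfying the Euler condition. -/
def IsFoliation (d : ℕ) (a b c : P3) : Prop :=
  a.IsHomogeneous (d + 1) ∧ b.IsHomogeneous (d + 1) ∧ c.IsHomogeneous (d + 1) ∧
  (∀ p : P3, p ∣ a → p ∣ b → p ∣ c → IsUnit p) ∧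
  X 0 * a + X 1 * b + X 2 * c = 0

/-- Polynomials in two variables over `ℂ`. -/
abbrev P2 : Type := MvPolynomial (Fin 2) ℂ

/-- Restriction to the line at infinity: `p(x, y, 0)`. -/
def atZ0 (p : P3) : P2 := aeval ![(X 0 : P2), X 1, 0] p

/-- The inflection polynomial `D = A_x B_y − A_y B_x`. -/
def Dpoly (A B : P2) : P2 :=
  pderiv 0 A * pderiv 1 B - pderiv 1 A * pderiv 0 B

/-- `A` and `B` have no common (non-unit) factor. -/
def NoCommonFactor (A B : P2) : Prop := ∀ p : P2, p ∣ A → p ∣ B → IsUnit p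

/-- Convexity: every linear factor of `D` divides `xA + yB`. -/
def IsConvexPair (A B : P2) : Prop :=
  ∀ l : P2, l.IsHomogeneous 1 → l ≠ 0 → l ∣ Dpoly A B → l ∣ (X 0 * A + X 1 * B)

/-- Two polynomials are proportional (one is a constant multiple of the other). -/
def Proportional (l₁ l₂ : P2) : Prop := ∃ t : ℂ, l₁ = C t * l₂ ∨ l₂ = C t * l₁


/-- The inflection polynomial of the vector field `b ∂ᵢ - a ∂ⱼ`. -/
def Ex {σ : Type} (i j : σ) (a b : MvPolynomial σ ℂ) : MvPolynomial σ ℂ :=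
  a * b * (pderiv j a + pderiv i b) - b ^ 2 * pderiv i a - a ^ 2 * pderiv j b

lemma hom_eval_smul {σ : Type} {n : ℕ} {F : MvPolynomial σ ℂ} (hF : F.IsHomogeneous n)
    (s : ℂ) (p : σ → ℂ) : eval (fun i => s * p i) F = s ^ n * eval p F := by
  classical
  rw [eval_eq, eval_eq, Finset.mul_sum]
  refine Finset.sum_congr rfl fun m hm => ?_
  have h := hF.degree_eq_sum_deg_support hm
  simp only [mul_pow, Finset.prod_mul_distrib]
  rw [Finset.prod_pow_eq_pow_sum]
  have : ∑ i ∈ m.support, m i = n := by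
    rw [h]
  rw [this]; ring

lemma hom_not_unit {σ : Type} {n : ℕ} (hn : 1 ≤ n) {F : MvPolynomial σ ℂ}
    (hF : F.IsHomogeneous n) : ¬ IsUnit F := by
  intro h
  have h1 := hF.totalDegree h.ne_zero
  have h2 := (isUnit_iff_totalDegree_of_isReduced.mp h).2
  omega

lemma hom1_prime {σ : Type} {F : MvPolynomial σ ℂ}
    (hF : F.IsHomogeneous 1) (h0 : F ≠ 0) : Prime F := by
  rw [← UniqueFactorizationMonoid.irreducible_iff_prime]
  refine irreducible_of_totalDegree_eq_one (hF.totalDegree h0) fun x hx => ?_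
  rw [isUnit_iff_ne_zero]
  rintro rfl
  apply h0
  ext m
  simpa using hx m

lemma hom1_dvd {σ : Type} {F G : MvPolynomial σ ℂ}
    (hF : F.IsHomogeneous 1) (hG : G.IsHomogeneous 1) (hG0 : G ≠ 0) (h : F ∣ G) :
    ∃ t : ℂ, t ≠ 0 ∧ G = C t * F := by
  obtain ⟨u, rfl⟩ := h
  have hF0 := left_ne_zero_of_mul hG0
  have hu0 := right_ne_zero_of_mul hG0
  have h1 := totalDegree_mul_of_isDomain hF0 hu0
  rw [hF.totalDegree hF0, hG.totalDegree hG0] at h1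
  have hu := (totalDegree_eq_zero_iff_eq_C (p := u)).mp (by omega)
  refine ⟨coeff 0 u, ?_, ?_⟩
  · intro h; rw [h] at hu; simp [hu] at hu0
  · rw [← hu, mul_comm]

lemma hom1_eq {l : P2} (hl : l.IsHomogeneous 1) : ∃ p q : ℂ, l = C p * X 0 + C q * X 1 := by
  have h := hl.sum_X_mul_pderiv
  have hc : ∀ i : Fin 2, ∃ p, pderiv i l = C p := fun i =>
    ⟨_, (totalDegree_eq_zero_iff_eq_C (p := pderiv i l)).mp
      (by have := (hl.pderiv (i := i)).totalDegree_le; omega)⟩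
  obtain ⟨p, hp⟩ := hc 0
  obtain ⟨q, hq⟩ := hc 1
  refine ⟨p, q, ?_⟩
  rw [Fin.sum_univ_two, hp, hq] at h
  simp at h
  rw [← h]; ring

lemma hom_of_X_mul {σ : Type} {n : ℕ} (i : σ) {F : MvPolynomial σ ℂ}
    (h : (X i * F).IsHomogeneous (n + 1)) : F.IsHomogeneous n := by
  classical
  by_cases h0 : F = 0
  · rw [h0]; exact isHomogeneous_zero _ _ _

  intro m hm
  have h2 : coeff (Finsupp.single i 1 + m) (X i * F) ≠ 0 := by
    rw [coeff_X_mul]; exact hm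
  have h3 := h h2
  simp only [map_add, Finsupp.weight_single] at h3
  simp at h3
  omega

lemma chain_rule (p v : Fin 3 → ℂ) (F : P3) :
    Polynomial.derivative (aeval (fun i => Polynomial.C (p i) + Polynomial.C (v i) * Polynomial.X) F)
      = ∑ j, Polynomial.C (v j) *
        aeval (fun i => Polynomial.C (p i) + Polynomial.C (v i) * Polynomial.X) (pderiv j F) := by
  induction F using MvPolynomial.induction_on with
  | C r => simp
  | add f g hf hg => simp only [map_add, hf, hg, mul_add, Finset.sum_add_distrib]
  | mul_X f n hf =>
    simp only [map_mul, Polynomial.derivative_mul, hf, Derivation.leibniz, map_add,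
      aeval_X, smul_eq_mul, pderiv_X, Fin.sum_univ_three]
    fin_cases n <;> simp <;> ring

lemma univ_zero (w g K : Polynomial ℂ) (hw : w.eval 0 = 0) (hg : g.eval 0 ≠ 0)
    (h : g ^ 2 * Polynomial.derivative w = w * K) : w = 0 := by
  by_contra hne
  have hroot : w.IsRoot 0 := hw
  have hm := Polynomial.derivative_rootMultiplicity_of_root hroot
  have hpos : 0 < w.rootMultiplicity 0 := (Polynomial.rootMultiplicity_pos hne).2 hroot
  have hd : Polynomial.derivative w ≠ 0 := by
    intro h0
    have := Polynomial.derivative_eq_zero.1 h0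
    rw [Polynomial.eq_C_of_natDegree_eq_zero this] at hw hne
    simp at hw
    simp [hw] at hne
  have h1 : (Polynomial.X - Polynomial.C 0) ^ (w.rootMultiplicity 0) ∣
      g ^ 2 * Polynomial.derivative w := by
    rw [h]; exact Dvd.dvd.mul_right (Polynomial.pow_rootMultiplicity_dvd w 0) K
  have h2 : (Polynomial.X - Polynomial.C (0 : ℂ)) ^ (w.rootMultiplicity 0) ∣
      Polynomial.derivative w := by
    refine (Polynomial.prime_X_sub_C (0 : ℂ)).pow_dvd_of_dvd_mul_left _ ?_ h1
    intro h3
    have h4 := (Polynomial.prime_X_sub_C (0 : ℂ)).dvd_of_dvd_pow h3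
    rw [Polynomial.dvd_iff_isRoot] at h4
    exact hg h4
  have h5 := (Polynomial.le_rootMultiplicity_iff hd).2 h2
  omega

lemma atZ0_pderiv0 (F : P3) : atZ0 (pderiv 0 F) = pderiv 0 (atZ0 F) := by
  unfold atZ0
  induction F using MvPolynomial.induction_on with
  | C r => simp [MvPolynomial.algebraMap_eq]
  | add f g hf hg => simp only [map_add, hf, hg]
  | mul_X f n hf =>
    simp only [map_mul, hf, Derivation.leibniz, map_add, aeval_X, smul_eq_mul, pderiv_X]
    fin_cases n <;> simp

lemma atZ0_pderiv1 (F : P3) : atZ0 (pderiv 1 F) = pderiv 1 (atZ0 F) := by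
  unfold atZ0
  induction F using MvPolynomial.induction_on with
  | C r => simp [MvPolynomial.algebraMap_eq]
  | add f g hf hg => simp only [map_add, hf, hg]
  | mul_X f n hf =>
    simp only [map_mul, hf, Derivation.leibniz, map_add, aeval_X, smul_eq_mul, pderiv_X]
    fin_cases n <;> simp

lemma atZ0_Ex (a b : P3) : atZ0 (Ex 0 1 a b) = Ex 0 1 (atZ0 a) (atZ0 b) := by
  unfold Ex
  rw [← atZ0_pderiv0, ← atZ0_pderiv1, ← atZ0_pderiv0, ← atZ0_pderiv1]
  simp [atZ0]

lemma atZ0_hom {F : P3} {n : ℕ} (h : F.IsHomogeneous n) : (atZ0 F).IsHomogeneous n := by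
  have := h.aeval (S := ℂ) (τ := Fin 2) ![(X 0 : P2), X 1, 0] (n := 1) (by
    intro i; fin_cases i
    · exact isHomogeneous_X _ _
    · exact isHomogeneous_X _ _
    · exact isHomogeneous_zero _ _ _)
  rw [one_mul] at this
  exact this

lemma atZ0_pderiv2 (F : P3) : atZ0 (pderiv 2 (X 2 * F)) = atZ0 F := by
  simp [atZ0, Derivation.leibniz]

lemma eval_atZ0 (F : P3) (x y : ℂ) : eval ![x, y] (atZ0 F) = eval ![x, y, 0] F := by
  unfold atZ0
  induction F using MvPolynomial.induction_on with
  | C r => simp [MvPolynomial.algebraMap_eq]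
  | add f g hf hg => simp only [map_add, hf, hg]
  | mul_X f n hf =>
    simp only [map_mul, hf, aeval_X, eval_X]
    fin_cases n <;> simp

/-- `z` divides a polynomial whose restriction to `z = 0` vanishes. -/
lemma X2_dvd_of_atZ0 (F : P3) (h : atZ0 F = 0) : (X 2 : P3) ∣ F := by
  have key : ∀ G : P3, (X 2 : P3) ∣ G - rename ![0, 1] (atZ0 G) := by
    intro G
    unfold atZ0
    induction G using MvPolynomial.induction_on with
    | C r => simp [MvPolynomial.algebraMap_eq]
    | add f g hf hg =>
      simp only [map_add]
      convert dvd_add hf hg using 1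
      ring
    | mul_X f n hf =>
      fin_cases n
      · simp only [map_mul, aeval_X]
        simpa [sub_mul] using hf.mul_right (X 0)
      · simp only [map_mul, aeval_X]
        simpa [sub_mul] using hf.mul_right (X 1)
      · simp
  simpa [h] using key F

lemma euler_D {d : ℕ} (A B : P2) (hA : A.IsHomogeneous d) (hB : B.IsHomogeneous d) :
    (d : P2) * Ex 0 1 A B = -((X 0 * A + X 1 * B) * Dpoly A B) := by
  have h1 := hA.sum_X_mul_pderiv
  have h2 := hB.sum_X_mul_pderiv
  rw [Fin.sum_univ_two, nsmul_eq_mul] at h1 h2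
  unfold Ex Dpoly
  linear_combination (A * pderiv 1 B - B * pderiv 0 B) * h1 + (B * pderiv 0 A - A * pderiv 1 A) * h2

/-- The inflection polynomial in rotated coordinates. -/
lemma Ex_rotate {σ : Type} (i j : σ) (a b N M : MvPolynomial σ ℂ) (p q r s : ℂ)
    (h : p * r + q * s = 1) (hN : N = C q * a - C p * b) (hM : M = C r * a + C s * b) :
    Ex i j a b = M ^ 2 * (C p * pderiv j N - C q * pderiv i N)
      - N * M * (C p * pderiv j M - C q * pderiv i M)
      + M * N * (C r * pderiv i N + C s * pderiv j N)
      - N ^ 2 * (C r * pderiv i M + C s * pderiv j M) := by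
  have h1 : (C p * C r + C q * C s : MvPolynomial σ ℂ) = 1 := by
    rw [← C_mul, ← C_mul, ← C_add, h, C_1]
  have h2 : Ex i j a b = (C p * C r + C q * C s) ^ 2 * Ex i j a b := by rw [h1]; ring
  rw [h2, hN, hM]
  unfold Ex
  simp only [map_sub, map_add, Derivation.leibniz, pderiv_C, smul_eq_mul, mul_zero, add_zero]
  ring

lemma exists_rs {p q : ℂ} (h : ¬ (p = 0 ∧ q = 0)) : ∃ r s : ℂ, p * r + q * s = 1 := by
  by_cases hp : p = 0
  · have hq : q ≠ 0 := fun hq => h ⟨hp, hq⟩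
    exact ⟨0, q⁻¹, by field_simp; simp⟩
  · exact ⟨p⁻¹, 0, by field_simp; simp⟩

/-- If the inflection polynomial vanishes, the line through `p` in the direction of the
vector field is a leaf; its point at infinity is then singular. -/
lemma line_inv {d : ℕ} (a b : P3) (ha : a.IsHomogeneous d) (hb : b.IsHomogeneous d)
    (hE : Ex 0 1 a b = 0) (p : Fin 3 → ℂ) (hβ : eval p b ≠ 0) :
    eval p b * eval ![eval p b, -eval p a, 0] a - eval p a * eval ![eval p b, -eval p a, 0] b
      = 0 := by
  set α := eval p a with hα
  set β := eval p b with hβ'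
  set v : Fin 3 → ℂ := ![β, -α, 0] with hv
  set φ : P3 →ₐ[ℂ] Polynomial ℂ :=
    aeval (fun i => Polynomial.C (p i) + Polynomial.C (v i) * Polynomial.X) with hφ
  have hev : ∀ (F : P3) (t : ℂ), (φ F).eval t = eval (fun i => p i + v i * t) F := by
    intro F t
    induction F using MvPolynomial.induction_on with
    | C r => simp [hφ]
    | add f g hf hg => simp only [map_add, Polynomial.eval_add, hf, hg]
    | mul_X f n hf =>
      simp only [map_mul, Polynomial.eval_mul, hf, eval_X]
      simp [hφ]
  have hca := chain_rule p v a
  have hcb := chain_rule p v b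
  rw [← hφ, Fin.sum_univ_three] at hca hcb
  have hE' := congrArg φ hE
  simp only [Ex, map_sub, map_mul, map_add, map_pow, map_zero] at hE'
  have hv0 : v 0 = β := rfl
  have hv1 : v 1 = -α := rfl
  have hv2 : v 2 = 0 := rfl
  rw [hv0, hv1, hv2] at hca hcb
  simp only [map_neg, map_zero, zero_mul, add_zero] at hca hcb
  have hw : Polynomial.C α * φ b - Polynomial.C β * φ a = 0 := by
    apply univ_zero _ (φ b)
      (Polynomial.C β * φ b * (φ (pderiv 1 a) + φ (pderiv 0 b)) * Polynomial.C β * 0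
        + Polynomial.C β * φ b * (φ (pderiv 1 a) + φ (pderiv 0 b))
        - (Polynomial.C α * φ b + Polynomial.C β * φ a) * φ (pderiv 1 b))
    · simp only [Polynomial.eval_sub, Polynomial.eval_mul, Polynomial.eval_C, hev]
      simp only [mul_zero, add_zero]
      change α * β - β * α = 0
      ring
    · rw [hev]; simpa using hβ
    · simp only [Polynomial.derivative_sub, Polynomial.derivative_mul, Polynomial.derivative_C,
        hca, hcb]
      linear_combination (Polynomial.C β) ^ 2 * hE'
  have hline : ∀ t : ℂ, α * eval (fun i => p i + v i * t) b
      - β * eval (fun i => p i + v i * t) a = 0 := by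
    intro t
    have := congrArg (Polynomial.eval t) hw
    simpa [hev] using this
  -- homogenize
  set ψ : P3 →ₐ[ℂ] Polynomial ℂ :=
    aeval (fun i => Polynomial.C (p i) * Polynomial.X + Polynomial.C (v i)) with hψ
  have hevψ : ∀ (F : P3) (t : ℂ), (ψ F).eval t = eval (fun i => p i * t + v i) F := by
    intro F t
    induction F using MvPolynomial.induction_on with
    | C r => simp [hψ]
    | add f g hf hg => simp only [map_add, Polynomial.eval_add, hf, hg]
    | mul_X f n hf =>
      simp only [map_mul, Polynomial.eval_mul, hf, eval_X]
      simp [hψ]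
  have hz : Polynomial.X * (Polynomial.C α * ψ b - Polynomial.C β * ψ a) = 0 := by
    apply Polynomial.funext
    intro s
    by_cases hs : s = 0
    · simp [hs]
    · have h1 : (fun i => p i * s + v i) = fun i => s * (p i + v i * s⁻¹) := by
        funext i; field_simp
      simp only [Polynomial.eval_mul, Polynomial.eval_sub, Polynomial.eval_X, Polynomial.eval_C,
        hevψ, h1, hom_eval_smul ha, hom_eval_smul hb, Polynomial.eval_zero]
      linear_combination s * s ^ d * hline s⁻¹
  have hz2 := (mul_eq_zero.1 hz).resolve_left Polynomial.X_ne_zero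
  have hz3 := congrArg (Polynomial.eval 0) hz2
  simp only [Polynomial.eval_mul, Polynomial.eval_sub, Polynomial.eval_C,
        hevψ, Polynomial.eval_zero, mul_zero, zero_add] at hz3
  linear_combination -hz3

lemma Ex_ne_zero {d : ℕ} (hd : 1 ≤ d) (a b : P3) (ha : a.IsHomogeneous d)
    (hb : b.IsHomogeneous d) (hcop : ∀ p : P3, p ∣ a → p ∣ b → IsUnit p)
    (hc : X 0 * atZ0 a + X 1 * atZ0 b ≠ 0) : Ex 0 1 a b ≠ 0 := by
  intro hE
  set c0 : P2 := X 0 * atZ0 a + X 1 * atZ0 b with hc0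
  have hchom : c0.IsHomogeneous (d + 1) := by
    rw [add_comm d 1]
    exact ((isHomogeneous_X _ _).mul (atZ0_hom ha)).add ((isHomogeneous_X _ _).mul (atZ0_hom hb))
  have hb0 : b ≠ 0 := by
    rintro rfl
    exact hom_not_unit hd ha (hcop a dvd_rfl (dvd_zero _))
  set P : Polynomial ℂ := aeval ![(1 : Polynomial ℂ), -Polynomial.X] c0 with hP
  have hPev : ∀ t : ℂ, P.eval t = eval ![1, -t] c0 := by
    intro t
    rw [hP]
    generalize c0 = F
    induction F using MvPolynomial.induction_on with
    | C r => simp [MvPolynomial.algebraMap_eq]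
    | add f g hf hg => simp only [map_add, Polynomial.eval_add, hf, hg]
    | mul_X f n hf =>
      simp only [map_mul, Polynomial.eval_mul, hf, eval_X, aeval_X]
      fin_cases n <;> simp
  have hscale : ∀ x y : ℂ, x ≠ 0 → eval ![x, y] c0 = x ^ (d + 1) * P.eval (-(y / x)) := by
    intro x y hx
    rw [hPev, ← hom_eval_smul hchom]
    congr 2
    funext i
    fin_cases i
    · simp
    · simp; field_simp
  have hP0 : P ≠ 0 := by
    intro h0
    have : (X 0 : P2) * c0 = 0 := by
      apply MvPolynomial.funext
      intro x
      have hx : x = ![x 0, x 1] := by funext i; fin_cases i <;> rfl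
      by_cases h : x 0 = 0
      · simp [h]
      · rw [map_mul, hx, hscale _ _ h, h0]; simp
    rcases mul_eq_zero.1 this with h | h
    · exact X_ne_zero _ h
    · exact hc h
  have hQ : b * (P.roots.map (fun r => a - C r * b)).prod = 0 := by
    apply MvPolynomial.funext
    intro p
    by_cases hβ : eval p b = 0
    · simp [hβ]
    · have h1 := line_inv a b ha hb hE p hβ
      have h2 : eval ![eval p b, -eval p a] c0 = 0 := by
        rw [hc0]
        simp only [map_add, map_mul, eval_atZ0, eval_X]
        simp only [Matrix.cons_val_zero, Matrix.cons_val_one]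
        linear_combination h1
      rw [hscale _ _ hβ] at h2
      have h3 := (mul_eq_zero.1 h2).resolve_left (pow_ne_zero _ hβ)
      have h4 : eval p a / eval p b ∈ P.roots := by
        rw [Polynomial.mem_roots hP0]
        rw [neg_div, neg_neg] at h3
        exact h3
      rw [map_mul, map_zero, map_multiset_prod]
      apply mul_eq_zero_of_right
      apply Multiset.prod_eq_zero
      rw [Multiset.map_map, Multiset.mem_map]
      refine ⟨_, h4, ?_⟩
      simp
      field_simp
      simp
  rcases mul_eq_zero.1 hQ with h | h
  · exact hb0 h
  · rw [Multiset.prod_eq_zero_iff, Multiset.mem_map] at h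
    obtain ⟨r, -, hr⟩ := h
    have : a = C r * b := by linear_combination hr
    exact hom_not_unit hd hb (hcop b (this ▸ dvd_mul_left _ _) dvd_rfl)

lemma pow_dvd_pderiv {σ : Type} (i : σ) (l N : MvPolynomial σ ℂ) (k : ℕ) (h : l ^ (k + 1) ∣ N) :
    l ^ k ∣ pderiv i N := by
  obtain ⟨g, rfl⟩ := h
  rw [Derivation.leibniz, Derivation.leibniz_pow]
  simp only [smul_eq_mul, nsmul_eq_mul, Nat.add_sub_cancel]
  refine dvd_add ⟨l * pderiv i g, by ring⟩ ⟨g * (((k + 1 : ℕ) : MvPolynomial σ ℂ) * pderiv i l), ?_⟩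
  ring

lemma hom1_coeffs {p q : ℂ} (h : (C p * X 0 + C q * X 1 : P2) ≠ 0) : ¬ (p = 0 ∧ q = 0) := by
  rintro ⟨rfl, rfl⟩
  simp at h

/-- Exact multiplicity of a linear form in a product of linear forms. -/
lemma not_pow_dvd {ι : Type} (S : Finset ι) (m : ι → P2) [DecidableEq ι]
    (hm : ∀ i ∈ S, (m i).IsHomogeneous 1 ∧ m i ≠ 0) (u : ℂ) (hu : u ≠ 0)
    (l : P2) (hl : l.IsHomogeneous 1) (hl0 : l ≠ 0) (T : Finset ι) (hT : T ⊆ S)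
    (hTl : ∀ i ∈ S, i ∈ T ↔ l ∣ m i) : ¬ l ^ (T.card + 1) ∣ C u * ∏ i ∈ S, m i := by
  intro h
  have hp := hom1_prime hl hl0
  have h1 : ∏ i ∈ T, m i ∣ l ^ T.card := by
    rw [← Finset.prod_const]
    apply Finset.prod_dvd_prod_of_dvd
    intro i hi
    obtain ⟨t, ht, h2⟩ := hom1_dvd hl (hm i (hT hi)).1 (hm i (hT hi)).2 ((hTl i (hT hi)).1 hi)
    refine ⟨C t⁻¹, ?_⟩
    rw [h2, mul_comm, ← mul_assoc, ← C_mul, inv_mul_cancel₀ ht, C_1, one_mul]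
  rw [← Finset.prod_sdiff hT] at h
  have h2 : l ^ (T.card + 1) ∣ l ^ T.card * (C u * ∏ i ∈ S \ T, m i) := by
    refine h.trans ?_
    obtain ⟨w, hw⟩ := h1
    exact ⟨w, by rw [hw]; ring⟩
  rw [pow_succ, mul_dvd_mul_iff_left (pow_ne_zero _ hl0)] at h2
  rcases hp.dvd_or_dvd h2 with h3 | h3
  · exact hp.not_isUnit (isUnit_of_dvd_unit h3 ((isUnit_iff_ne_zero.2 hu).map C))
  · obtain ⟨i, hi, h4⟩ := (hp.dvd_finsetProd_iff _).1 h3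
    rw [Finset.mem_sdiff] at hi
    exact hi.2 ((hTl i hi.1).2 h4)

lemma final_aux {d : ℕ} (hd : 1 ≤ d) (A B : P2) (hA : A.IsHomogeneous d) (hB : B.IsHomogeneous d)
    {ι : Type} [DecidableEq ι] (S : Finset ι) (m : ι → P2)
    (hm : ∀ i ∈ S, (m i).IsHomogeneous 1 ∧ m i ≠ 0) (u : ℂ) (hu : u ≠ 0)
    (hE : Ex 0 1 A B = C u * ∏ i ∈ S, m i)
    (hdvd : ∀ i ∈ S, m i ∣ X 0 * A + X 1 * B)
    (hc : X 0 * A + X 1 * B ≠ 0)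
    (hN : ∀ (p q : ℂ) (T : Finset ι), (C p * X 0 + C q * X 1 : P2) ≠ 0 → T ⊆ S →
      (∀ i ∈ T, (C p * X 0 + C q * X 1 : P2) ∣ m i) →
      (C p * X 0 + C q * X 1 : P2) ^ T.card ∣ C q * A - C p * B) :
    NoCommonFactor A B ∧ IsConvexPair A B ∧ Squarefree (X 0 * A + X 1 * B) ∧
    ∃ c₀ : ℂ, c₀ ≠ 0 ∧ ∃ ℓ : Fin (d + 1) → P2,
      (∀ i, (ℓ i).IsHomogeneous 1 ∧ ℓ i ≠ 0) ∧
      (∀ i j, i ≠ j → ¬ Proportional (ℓ i) (ℓ j)) ∧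
      X 0 * A + X 1 * B = C c₀ * ∏ i, ℓ i := by
  classical
  have hdC : IsUnit (d : P2) := by
    have : ((d : ℂ)) ≠ 0 := by exact_mod_cast (by omega : d ≠ 0)
    simpa using (isUnit_iff_ne_zero.2 this).map (C : ℂ →+* P2)
  have heuler := euler_D A B hA hB
  set c0 := X 0 * A + X 1 * B with hc0
  have hc0E : c0 ∣ Ex 0 1 A B := by
    rw [← hdC.dvd_mul_left, heuler]
    exact (Dvd.intro _ rfl).neg_right
  have hDE : Dpoly A B ∣ Ex 0 1 A B := by
    rw [← hdC.dvd_mul_left, heuler]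
    exact (Dvd.intro_left _ rfl).neg_right
  have hchom : c0.IsHomogeneous (d + 1) := by
    rw [add_comm d 1]
    exact ((isHomogeneous_X _ _).mul hA).add ((isHomogeneous_X _ _).mul hB)
  -- prime divisors of the inflection polynomial
  have hprime : ∀ f : P2, Prime f → f ∣ Ex 0 1 A B → ∃ i ∈ S, f ∣ m i := by
    intro f hf h
    rw [hE] at h
    rcases hf.dvd_or_dvd h with h3 | h3
    · exact absurd (isUnit_of_dvd_unit h3 ((isUnit_iff_ne_zero.2 hu).map C)) hf.not_isUnit
    · exact (hf.dvd_finsetProd_iff _).1 h3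
  have hfhom : ∀ f : P2, Prime f → f ∣ Ex 0 1 A B → f.IsHomogeneous 1 := by
    intro f hf h
    obtain ⟨i, hi, h1⟩ := hprime f hf h
    have hmp := hom1_prime (hm i hi).1 (hm i hi).2
    obtain ⟨w, hw⟩ := hf.associated_of_dvd hmp h1
    have hw2 := (totalDegree_eq_zero_iff_eq_C (p := ((w⁻¹ : P2ˣ) : P2))).mp
      (isUnit_iff_totalDegree_of_isReduced.mp (w⁻¹).isUnit).2
    have : f = C (coeff 0 ((w⁻¹ : P2ˣ) : P2)) * m i := by
      rw [← hw2, ← hw, mul_comm, mul_assoc, Units.mul_inv, mul_one]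
    rw [this]
    exact (hm i hi).1.C_mul _
  -- the two local statements
  have hlocal : ∀ l : P2, l.IsHomogeneous 1 → l ≠ 0 → l ∣ c0 → ¬ (l ∣ A ∧ l ∣ B) ∧ ¬ l * l ∣ c0 := by
    intro l hl hl0 hlc
    have hlp := hom1_prime hl hl0
    set T := S.filter (fun i => l ∣ m i) with hT
    have hnd := not_pow_dvd S m hm u hu l hl hl0 T (Finset.filter_subset _ _)
      (fun i hi => by simp [hT, hi])
    rw [← hE] at hnd
    obtain ⟨k, hk⟩ : ∃ k, T.card = k + 1 := by
      obtain ⟨i, hi, h1⟩ := hprime l hlp (hlc.trans hc0E)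
      have : 0 < T.card := Finset.card_pos.2 ⟨i, by simp [hT, hi, h1]⟩
      exact ⟨T.card - 1, by omega⟩
    obtain ⟨p, q, hpq⟩ := hom1_eq hl
    have hNd := hN p q T (hpq ▸ hl0) (Finset.filter_subset _ _)
      (fun i hi => by rw [← hpq]; exact (Finset.mem_filter.1 hi).2)
    rw [← hpq] at hNd
    obtain ⟨r, s, hrs⟩ := exists_rs (hom1_coeffs (hpq ▸ hl0))
    have hrot := Ex_rotate 0 1 A B _ _ p q r s hrs rfl rfl
    have h1 : (C p * C r + C q * C s : P2) = 1 := by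
      rw [← C_mul, ← C_mul, ← C_add, hrs, C_1]
    set N := C q * A - C p * B with hNdef
    set M := C r * A + C s * B with hMdef
    have hAe : A = C s * N + C p * M := by
      rw [hNdef, hMdef]; linear_combination (-A) * h1
    have hBe : B = -C r * N + C q * M := by
      rw [hNdef, hMdef]; linear_combination (-B) * h1
    rw [hk] at hNd hnd
    have hfirst : ¬ (l ∣ A ∧ l ∣ B) := by
      rintro ⟨hlA, hlB⟩
      have hlM : l ∣ M := dvd_add (hlA.mul_left _) (hlB.mul_left _)
      apply hnd
      rw [hrot]
      have hx := pow_dvd_pderiv 0 l N k hNd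
      have hy := pow_dvd_pderiv 1 l N k hNd
      have e : l ^ (k + 1 + 1) = l ^ 2 * l ^ k := by ring
      have e2 : l ^ (k + 1 + 1) = l ^ (k + 1) * l := by ring
      have e3 : l ^ (k + 1 + 1) ∣ l ^ (k + 1) * l ^ (k + 1) := ⟨l ^ k, by ring⟩
      refine dvd_sub (dvd_add (dvd_sub ?_ ?_) ?_) ?_
      · rw [e]
        exact mul_dvd_mul (pow_dvd_pow_of_dvd hlM 2) (dvd_sub (hy.mul_left _) (hx.mul_left _))
      · rw [e2]
        exact (mul_dvd_mul hNd hlM).mul_right _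
      · rw [e2, mul_comm M N]
        exact (mul_dvd_mul hNd hlM).mul_right _
      · rw [sq]
        exact (e3.trans (mul_dvd_mul hNd hNd)).mul_right _
    refine ⟨hfirst, fun hsq => ?_⟩
    rcases Nat.eq_zero_or_pos k with rfl | hkpos
    · apply hnd
      have : l ^ (0 + 1 + 1) = l * l := by ring
      rw [this]
      exact hsq.trans hc0E
    · have hlN2 : l * l ∣ N := by
        refine Dvd.dvd.trans ⟨l ^ (k - 1), ?_⟩ hNd
        rw [← sq, ← pow_add]; congr 1; omega
      have hlN : l ∣ N := (Dvd.intro _ rfl).trans hlN2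
      have hce : c0 = l * M + (C s * X 0 - C r * X 1) * N := by
        rw [hc0, hpq]
        nth_rw 1 [hAe]
        nth_rw 1 [hBe]
        ring
      have h2 : l * l ∣ l * M := by
        have : l * M = c0 - (C s * X 0 - C r * X 1) * N := by rw [hce]; ring
        rw [this]
        exact dvd_sub hsq (hlN2.mul_left _)
      rw [mul_dvd_mul_iff_left hl0] at h2
      apply hfirst
      constructor
      · rw [hAe]; exact dvd_add (hlN.mul_left _) (h2.mul_left _)
      · rw [hBe]; exact dvd_add (hlN.mul_left _) (h2.mul_left _)
  have hsf : Squarefree c0 := by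
    intro p hp
    by_contra hnu
    have hp0 : p ≠ 0 := by rintro rfl; exact hc (by simpa using hp)
    obtain ⟨f, hf, hfp⟩ := WfDvdMonoid.exists_irreducible_factor hnu hp0
    have hfc : f * f ∣ c0 := (mul_dvd_mul hfp hfp).trans hp
    have hfc1 : f ∣ c0 := (Dvd.intro _ rfl).trans hfc
    exact (hlocal f (hfhom f hf.prime (hfc1.trans hc0E)) hf.ne_zero hfc1).2 hfc
  refine ⟨?_, ?_, hsf, ?_⟩
  · intro p hpA hpB
    by_contra hnu
    have hpc : p ∣ c0 := dvd_add (hpA.mul_left _) (hpB.mul_left _)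
    have hp0 : p ≠ 0 := by rintro rfl; exact hc (by simpa using hpc)
    obtain ⟨f, hf, hfp⟩ := WfDvdMonoid.exists_irreducible_factor hnu hp0
    have hfc := hfp.trans hpc
    exact (hlocal f (hfhom f hf.prime (hfc.trans hc0E)) hf.ne_zero hfc).1
      ⟨hfp.trans hpA, hfp.trans hpB⟩
  · intro l hl hl0 hlD
    obtain ⟨i, hi, h1⟩ := hprime l (hom1_prime hl hl0) (hlD.trans hDE)
    exact h1.trans (hdvd i hi)
  · obtain ⟨F, hFirr, hFa⟩ := WfDvdMonoid.exists_factors c0 hc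
    obtain ⟨w, hw⟩ := hFa
    have hFdvd : ∀ f ∈ F, f ∣ c0 := fun f hf =>
      (Multiset.dvd_prod hf).trans ⟨w, hw.symm⟩
    have hF1 : ∀ f ∈ F, f.IsHomogeneous 1 := fun f hf =>
      hfhom f (hFirr f hf).prime ((hFdvd f hf).trans hc0E)
    obtain ⟨Q, rfl⟩ : ∃ Q : List P2, F = ↑Q := ⟨F.toList, F.coe_toList.symm⟩
    rw [Multiset.prod_coe] at hw
    have hprodhom : ∀ R : List P2, (∀ f ∈ R, f.IsHomogeneous 1) → R.prod.IsHomogeneous R.length := by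
      intro R
      induction R with
      | nil => intro _; simpa using isHomogeneous_one (Fin 2) ℂ
      | cons f R ih =>
        intro h
        rw [List.prod_cons, List.length_cons, add_comm]
        exact (h f (by simp)).mul (ih fun g hg => h g (by simp [hg]))
    have hw2 := (totalDegree_eq_zero_iff_eq_C (p := (w : P2))).mp
      (isUnit_iff_totalDegree_of_isReduced.mp w.isUnit).2
    set c₀ := coeff 0 (w : P2) with hc₀
    have hc₀0 : c₀ ≠ 0 := by
      intro h
      have := w.ne_zero
      rw [hw2, h] at this
      simp at this
    have hceq : c0 = C c₀ * Q.prod := by rw [← hw2, ← hw, mul_comm]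
    have hlen : Q.length = d + 1 := by
      have h1 := (hprodhom Q (fun f hf => hF1 f (by simpa using hf))).C_mul c₀
      rw [← hceq] at h1
      exact h1.inj_right hchom hc
    refine ⟨c₀, hc₀0, fun i => Q.get (i.cast hlen.symm), ?_, ?_, ?_⟩
    · intro i
      have : Q.get (i.cast hlen.symm) ∈ (Q : Multiset P2) := by simp
      exact ⟨hF1 _ this, (hFirr _ this).ne_zero⟩
    · have hprod : c0 = C c₀ * ∏ i : Fin (d + 1), Q.get (i.cast hlen.symm) := by
        rw [hceq, ← List.prod_ofFn, ← List.ofFn_congr hlen, List.ofFn_get]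
      have hmain : ∀ (i j : Fin (d + 1)), i ≠ j → ∀ t : ℂ,
          Q.get (i.cast hlen.symm) ≠ C t * Q.get (j.cast hlen.symm) := by
        intro i j hij t h
        have hmem : Q.get (j.cast hlen.symm) ∈ (Q : Multiset P2) := by simp
        have h1 : Q.get (i.cast hlen.symm) * Q.get (j.cast hlen.symm) ∣ c0 := by
          rw [hprod, ← Finset.prod_pair (f := fun i : Fin (d + 1) => Q.get (i.cast hlen.symm)) hij]
          exact (Finset.prod_dvd_prod_of_subset _ _ _ (Finset.subset_univ _)).mul_left _
        rw [h] at h1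
        have h2 : Q.get (j.cast hlen.symm) * Q.get (j.cast hlen.symm) ∣ c0 :=
          (Dvd.intro_left (C t) (by ring)).trans h1
        exact (hFirr _ hmem).not_isUnit (hsf _ h2)
      rintro i j hij ⟨t, h | h⟩
      · exact hmain i j hij t h
      · exact hmain j i hij.symm t h
    · rw [hceq, ← List.prod_ofFn, ← List.ofFn_congr hlen, List.ofFn_get]

lemma lin_hom (l : Fin 3 → ℂ) : (lin l).IsHomogeneous 1 :=
  ((isHomogeneous_C_mul_X _ _).add (isHomogeneous_C_mul_X _ _)).add (isHomogeneous_C_mul_X _ _)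

lemma lin_smul (t : ℂ) (l : Fin 3 → ℂ) : lin (t • l) = C t * lin l := by
  simp [lin]; ring

lemma lin_inj {l m : Fin 3 → ℂ} (h : lin l = lin m) : l = m := by
  funext i
  have := congrArg (eval (Pi.single i 1)) h
  fin_cases i <;> simpa [lin] using this

lemma lin_ne_zero {l : Fin 3 → ℂ} (h : l ≠ 0) : lin l ≠ 0 := by
  intro h0
  apply h
  apply lin_inj
  rw [h0]; simp [lin]

lemma atZ0_lin (l : Fin 3 → ℂ) : atZ0 (lin l) = C (l 0) * X 0 + C (l 1) * X 1 := by
  simp [lin, atZ0, MvPolynomial.algebraMap_eq]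

lemma lin2_ne_zero {p q : ℂ} (h : ¬ (p = 0 ∧ q = 0)) : (C p * X 0 + C q * X 1 : P2) ≠ 0 := by
  intro h0
  apply h
  constructor
  · simpa using congrArg (eval (Pi.single 0 1)) h0
  · simpa using congrArg (eval (Pi.single 1 1)) h0

lemma lin2_hom (p q : ℂ) : (C p * X 0 + C q * X 1 : P2).IsHomogeneous 1 :=
  (isHomogeneous_C_mul_X _ _).add (isHomogeneous_C_mul_X _ _)

/-- An invariant line other than `z = 0` divides a component of the field. -/
lemma lin_dvd_N {a b : P3} {l : Fin 3 → ℂ} (hl : ¬ (l 0 = 0 ∧ l 1 = 0)) (hl0 : l ≠ 0)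
    (h : lin l ∣ C (l 1) * (X 2 * a) - C (l 0) * (X 2 * b)) :
    lin l ∣ C (l 1) * a - C (l 0) * b := by
  have e : C (l 1) * (X 2 * a) - C (l 0) * (X 2 * b) = X 2 * (C (l 1) * a - C (l 0) * b) := by
    ring
  rw [e] at h
  rcases (hom1_prime (lin_hom l) (lin_ne_zero hl0)).dvd_or_dvd h with h1 | h1
  · exfalso
    obtain ⟨t, ht, h2⟩ := hom1_dvd (lin_hom l) (isHomogeneous_X _ _) (X_ne_zero _) h1
    apply hl
    constructor
    · simpa [lin, ht] using congrArg (eval (Pi.single 0 1)) h2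
    · simpa [lin, ht] using congrArg (eval (Pi.single 1 1)) h2
  · exact h1

lemma lin_dvd_Ex {a b : P3} {l : Fin 3 → ℂ} (hl : ¬ (l 0 = 0 ∧ l 1 = 0))
    (h : lin l ∣ C (l 1) * a - C (l 0) * b) : lin l ∣ Ex 0 1 a b := by
  obtain ⟨r, s, hrs⟩ := exists_rs hl
  rw [Ex_rotate 0 1 a b _ _ _ _ r s hrs rfl rfl]
  have h1 : lin l ∣ C (l 0) * pderiv 1 (C (l 1) * a - C (l 0) * b)
      - C (l 1) * pderiv 0 (C (l 1) * a - C (l 0) * b) := by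
    obtain ⟨g, hg⟩ := h
    rw [hg, Derivation.leibniz, Derivation.leibniz]
    have h0 : pderiv 0 (lin l) = C (l 0) := by
      simp [lin, Derivation.leibniz]
    have h1 : pderiv 1 (lin l) = C (l 1) := by
      simp [lin, Derivation.leibniz]
    rw [h0, h1]
    exact ⟨C (l 0) * pderiv 1 g - C (l 1) * pderiv 0 g, by simp only [smul_eq_mul]; ring⟩
  refine dvd_sub (dvd_add (dvd_sub ?_ ?_) ?_) ?_
  · exact h1.mul_left _
  · exact (h.mul_right _).mul_right _
  · exact (h.mul_left _).mul_right _
  · rw [sq]; exact (h.mul_right _).mul_right _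

lemma Ex_hom {d : ℕ} (hd : 1 ≤ d) {a b : P3} (ha : a.IsHomogeneous d) (hb : b.IsHomogeneous d) :
    (Ex 0 1 a b).IsHomogeneous (3 * d - 1) := by
  unfold Ex
  have e1 : 3 * d - 1 = d + d + (d - 1) := by omega
  have e2 : 3 * d - 1 = d * 2 + (d - 1) := by omega
  refine IsHomogeneous.sub (IsHomogeneous.sub ?_ ?_) ?_
  · rw [e1]; exact (ha.mul hb).mul (ha.pderiv.add hb.pderiv)
  · rw [e2]; exact (hb.pow 2).mul ha.pderiv
  · rw [e2]; exact (ha.pow 2).mul hb.pderiv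

/-- If `F` is a reduced convex foliation of degree `d ≥ 1` leaving the line `z = 0`
invariant, then `A_d = (∂a/∂z)(x,y,0)`, `B_d = (∂b/∂z)(x,y,0)` are homogeneous of degree
`d` with `xA_d + yB_d = −c(x,y,0)`; they are coprime; the homogeneous foliation
`A_d dx + B_d dy` is convex; and `xA_d + yB_d` is squarefree, being a product of `d+1`
pairwise non-proportional linear forms. -/
theorem reduced_convex_degenerates_to_convex_homogeneous
    (d : ℕ) (hd : 1 ≤ d) (a b c : P3) (hfol : IsFoliation d a b c)
    (L : Fin (3 * d) → (Fin 3 → ℂ))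
    (hinv : ∀ i, InvLine a b c (L i))
    (hnp : ∀ i j, i ≠ j → ∀ t : ℂ, L i ≠ t • L j)
    (hza : (X 2 : P3) ∣ a) (hzb : (X 2 : P3) ∣ b) :
    (atZ0 (pderiv 2 a)).IsHomogeneous d ∧ (atZ0 (pderiv 2 b)).IsHomogeneous d ∧
    X 0 * atZ0 (pderiv 2 a) + X 1 * atZ0 (pderiv 2 b) = -atZ0 c ∧
    NoCommonFactor (atZ0 (pderiv 2 a)) (atZ0 (pderiv 2 b)) ∧
    IsConvexPair (atZ0 (pderiv 2 a)) (atZ0 (pderiv 2 b)) ∧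
    Squarefree (X 0 * atZ0 (pderiv 2 a) + X 1 * atZ0 (pderiv 2 b)) ∧
    ∃ c₀ : ℂ, c₀ ≠ 0 ∧ ∃ ℓ : Fin (d + 1) → P2,
      (∀ i, (ℓ i).IsHomogeneous 1 ∧ ℓ i ≠ 0) ∧
      (∀ i j, i ≠ j → ¬ Proportional (ℓ i) (ℓ j)) ∧
      X 0 * atZ0 (pderiv 2 a) + X 1 * atZ0 (pderiv 2 b) = C c₀ * ∏ i, ℓ i := by
  classical
  obtain ⟨hha, hhb, hhc, hcop, heul⟩ := hfol
  obtain ⟨a', rfl⟩ := hza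
  obtain ⟨b', rfl⟩ := hzb
  have ha := hom_of_X_mul 2 hha
  have hb := hom_of_X_mul 2 hhb
  have hceq : c = -(X 0 * a' + X 1 * b') := by
    apply mul_left_cancel₀ (X_ne_zero (R := ℂ) (2 : Fin 3))
    linear_combination heul
  have hA := atZ0_hom ha
  have hB := atZ0_hom hb
  have hcz : atZ0 c = -(X 0 * atZ0 a' + X 1 * atZ0 b') := by
    rw [hceq]; simp [atZ0]
  rw [atZ0_pderiv2, atZ0_pderiv2]
  have hc0 : X 0 * atZ0 a' + X 1 * atZ0 b' ≠ 0 := by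
    intro h
    have h1 := X2_dvd_of_atZ0 c (by rw [hcz, h, neg_zero])
    exact hom_not_unit le_rfl (isHomogeneous_X ℂ (2 : Fin 3))
      (hcop (X 2) (Dvd.intro _ rfl) (Dvd.intro _ rfl) h1)
  have hE0 : Ex 0 1 a' b' ≠ 0 := by
    refine Ex_ne_zero hd a' b' ha hb (fun p hpa hpb => ?_) hc0
    refine hcop p (hpa.mul_left _) (hpb.mul_left _) ?_
    rw [hceq]
    exact (dvd_add (hpa.mul_left _) (hpb.mul_left _)).neg_right
  set S : Finset (Fin (3 * d)) := Finset.univ.filter (fun i => ¬ (L i 0 = 0 ∧ L i 1 = 0)) with hS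
  have hmemS : ∀ i ∈ S, ¬ (L i 0 = 0 ∧ L i 1 = 0) := fun i hi => (Finset.mem_filter.1 hi).2
  have hcard : 3 * d - 1 ≤ S.card := by
    have h1 : (Finset.univ.filter (fun i => (L i 0 = 0 ∧ L i 1 = 0))).card ≤ 1 := by
      rw [Finset.card_le_one]
      intro i hi j hj
      by_contra hij
      rw [Finset.mem_filter] at hi hj
      have hj2 : L j 2 ≠ 0 := by
        intro h
        apply (hinv j).1
        funext n
        fin_cases n
        · exact hj.2.1
        · exact hj.2.2
        · exact h
      apply hnp i j hij (L i 2 / L j 2)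
      funext n
      fin_cases n
      · simp [hi.2.1, hj.2.1]
      · simp [hi.2.2, hj.2.2]
      · simp [hj2]
    have h2 := Finset.card_filter_add_card_filter_not (s := (Finset.univ : Finset (Fin (3 * d))))
      (fun i => (L i 0 = 0 ∧ L i 1 = 0))
    rw [Finset.card_univ, Fintype.card_fin, ← hS] at h2
    omega
  have hdN : ∀ i ∈ S, lin (L i) ∣ C (L i 1) * a' - C (L i 0) * b' := fun i hi =>
    lin_dvd_N (hmemS i hi) (hinv i).1 (hinv i).2.1
  have hrel : ∀ i j, i ≠ j → IsRelPrime (lin (L i)) (lin (L j)) := by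
    intro i j hij
    rw [(hom1_prime (lin_hom _) (lin_ne_zero (hinv i).1)).irreducible.isRelPrime_iff_not_dvd]
    intro h
    obtain ⟨t, -, h1⟩ := hom1_dvd (lin_hom _) (lin_hom _) (lin_ne_zero (hinv j).1) h
    rw [← lin_smul] at h1
    exact hnp j i hij.symm t (lin_inj h1)
  obtain ⟨U, hU⟩ : ∏ i ∈ S, lin (L i) ∣ Ex 0 1 a' b' :=
    Finset.prod_dvd_of_isRelPrime (fun i _ j _ hij => hrel i j hij)
      (fun i hi => lin_dvd_Ex (hmemS i hi) (hdN i hi))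
  have hprodhom : (∏ i ∈ S, lin (L i)).IsHomogeneous S.card := by
    have := IsHomogeneous.prod S (fun i => lin (L i)) (fun _ => 1) (fun i _ => lin_hom _)
    simpa using this
  have hP0 : ∏ i ∈ S, lin (L i) ≠ 0 := by
    intro h; rw [h, zero_mul] at hU; exact hE0 hU
  have hU0 : U ≠ 0 := by
    rintro rfl; rw [mul_zero] at hU; exact hE0 hU
  have hUC : U = C (coeff 0 U) := by
    apply totalDegree_eq_zero_iff_eq_C.mp
    have h1 := totalDegree_mul_of_isDomain hP0 hU0
    rw [← hU, (Ex_hom hd ha hb).totalDegree hE0, hprodhom.totalDegree hP0] at h1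
    omega
  have hu : coeff 0 U ≠ 0 := by
    intro h; rw [hUC, h] at hU0; simp at hU0
  have hE : Ex 0 1 (atZ0 a') (atZ0 b') = C (coeff 0 U) * ∏ i ∈ S, atZ0 (lin (L i)) := by
    rw [← atZ0_Ex, hU, mul_comm]
    nth_rw 1 [hUC]
    simp only [atZ0, map_mul, map_prod]
    simp [MvPolynomial.algebraMap_eq]
  refine ⟨hA, hB, by rw [hcz, neg_neg], ?_⟩
  refine final_aux hd _ _ hA hB S (fun i => atZ0 (lin (L i))) ?_ (coeff 0 U) hu hE ?_ hc0 ?_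
  · intro i hi
    refine ⟨atZ0_hom (lin_hom _), ?_⟩
    change atZ0 (lin (L i)) ≠ 0
    rw [atZ0_lin]
    exact lin2_ne_zero (hmemS i hi)
  · intro i hi
    have hz : ∀ (s t : ℂ) (F : P3), atZ0 (C s * (X 2 * F) - C t * c)
        = C t * (X 0 * atZ0 a' + X 1 * atZ0 b') := by
      intro s t F
      have : atZ0 (C s * (X 2 * F) - C t * c) = - (C t * atZ0 c) := by
        simp [atZ0, MvPolynomial.algebraMap_eq]
      rw [this, hcz]; ring
    have hmap : ∀ F G : P3, F ∣ G → atZ0 F ∣ atZ0 G := fun F G h => by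
      unfold atZ0; exact map_dvd _ h
    have h1 := hmap _ _ (hinv i).2.2.1
    have h2 := hmap _ _ (hinv i).2.2.2
    rw [hz] at h1 h2
    by_cases h0 : L i 0 = 0
    · have h3 : L i 1 ≠ 0 := fun h => hmemS i hi ⟨h0, h⟩
      exact (((isUnit_iff_ne_zero.2 h3).map (C : ℂ →+* P2)).dvd_mul_left).1 h2
    · exact (((isUnit_iff_ne_zero.2 h0).map (C : ℂ →+* P2)).dvd_mul_left).1 h1
  · intro p q T hpq hTS hT
    have h1 : ∏ i ∈ T, lin (L i) ∣ C q * a' - C p * b' := by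
      refine Finset.prod_dvd_of_isRelPrime (fun i _ j _ hij => hrel i j hij) (fun i hi => ?_)
      have h2 := hT i hi
      have hne := lin2_ne_zero (hmemS i (hTS hi))
      change _ ∣ atZ0 (lin (L i)) at h2
      rw [atZ0_lin] at h2
      obtain ⟨t, ht, h3⟩ := hom1_dvd (lin2_hom p q) (lin2_hom _ _) hne h2
      have e0 : L i 0 = t * p := by
        simpa using congrArg (eval (Pi.single 0 1)) h3
      have e1 : L i 1 = t * q := by
        simpa using congrArg (eval (Pi.single 1 1)) h3
      have h4 := hdN i (hTS hi)
      have e : C (L i 1) * a' - C (L i 0) * b' = C t * (C q * a' - C p * b') := by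
        rw [e0, e1, C_mul, C_mul]; ring
      rw [e] at h4
      exact (((isUnit_iff_ne_zero.2 ht).map (C : ℂ →+* P3)).dvd_mul_left).1 h4
    have h2 : atZ0 (∏ i ∈ T, lin (L i)) ∣ atZ0 (C q * a' - C p * b') := by
      unfold atZ0; exact map_dvd _ h1
    have h3 : atZ0 (C q * a' - C p * b') = C q * atZ0 a' - C p * atZ0 b' := by
      simp [atZ0, MvPolynomial.algebraMap_eq]
    have h4 : atZ0 (∏ i ∈ T, lin (L i)) = ∏ i ∈ T, atZ0 (lin (L i)) := by
      simp only [atZ0, map_prod]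
    rw [h3, h4] at h2
    refine Dvd.dvd.trans ?_ h2
    rw [← Finset.prod_const]
    exact Finset.prod_dvd_prod_of_dvd _ _ hT
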